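/- arXiv:2506.18393 — 2 statements merged into one kernel-verified Lean document; each statement's English description precedes it below -/
import Mathlib

section
/- Let M=(Q,V,δ,q₀,F) be a DFAwtl, and suppose there are a state q, letters a,b∈V, a state s and words x∈V*, y,z∈V* and f∈F such that δ(q,a) is undefined, δ(q,b)=s, (s,ax)→*(q,ε), (q₀,y)→*(q,ε) and (q,z)→*(f,ε). Then for every n≥1 the word w_n = y(abx)ⁿz belongs to L(M) and jc_M(w_n) ≥ n; consequently JC_M is not constant-bounded. -/
/-- A deterministic finite automaton with translucent letters (DFAwtl):
`delta` is a partial transition function, `start` the initial state,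
`accept` the set of final states. -/
structure DFAwtl (Q V : Type*) where
  delta : Q → V → Option Q
  start : Q
  accept : Set Q

namespace DFAwtl

variable {Q V : Type*}

/-- Sequential step: `(s, a·y) → (p, y)` when `δ(s,a) = p`. -/
def SeqStep (M : DFAwtl Q V) (c c' : Q × List V) : Prop :=
  ∃ a : V, c.2 = a :: c'.2 ∧ M.delta c.1 a = some c'.1

/-- Jumping step: `(s, x·a·y) ↻ (p, x·y)` when `x ≠ ε`, `δ(s,a) = p`, and
`δ(s,b)` is undefined for every letter `b` occurring in `x`. -/
def JumpStep (M : DFAwtl Q V) (c c' : Q × List V) : Prop :=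
  ∃ (x y : List V) (a : V), x ≠ [] ∧ c.2 = x ++ a :: y ∧ c'.2 = x ++ y ∧
    M.delta c.1 a = some c'.1 ∧ ∀ b ∈ x, M.delta c.1 b = none

/-- Either a sequential or a jumping step. -/
def Step (M : DFAwtl Q V) (c c' : Q × List V) : Prop :=
  M.SeqStep c c' ∨ M.JumpStep c c'

/-- Reflexive–transitive closure of sequential steps (the relation `→*`). -/
def SeqSteps (M : DFAwtl Q V) : Q × List V → Q × List V → Prop :=
  Relation.ReflTransGen M.SeqStep

/-- Reflexive–transitive closure of all steps (the relation `⊨*`). -/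
def Steps (M : DFAwtl Q V) : Q × List V → Q × List V → Prop :=
  Relation.ReflTransGen M.Step

/-- `StepsN M c c' k` : configuration `c'` is reachable from `c` by a computation
containing exactly `k` jumping steps. -/
inductive StepsN (M : DFAwtl Q V) : Q × List V → Q × List V → ℕ → Prop
  | refl (c : Q × List V) : StepsN M c c 0
  | seq {c c' c'' : Q × List V} {n : ℕ} :
      M.SeqStep c c' → StepsN M c' c'' n → StepsN M c c'' n
  | jump {c c' c'' : Q × List V} {n : ℕ} :
      M.JumpStep c c' → StepsN M c' c'' n → StepsN M c c'' (n + 1)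

/-- The language accepted by `M`. -/
def lang (M : DFAwtl Q V) : Set (List V) :=
  {w | ∃ f ∈ M.accept, M.Steps (M.start, w) (f, [])}

/-- `M` accepts `w` by a computation with exactly `k` jumping steps. -/
def AcceptsIn (M : DFAwtl Q V) (w : List V) (k : ℕ) : Prop :=
  ∃ f ∈ M.accept, M.StepsN (M.start, w) (f, []) k

/-- The jump complexity of a word: the (for a deterministic machine, unique)
number of jumping steps in an accepting computation on `w`. -/
noncomputable def jc (M : DFAwtl Q V) (w : List V) : ℕ :=
  sInf {k | M.AcceptsIn w k}

/-- The jump complexity function: the maximal number of jumps over accepted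
words of length `n`. -/
noncomputable def JC (M : DFAwtl Q V) (n : ℕ) : ℕ :=
  sSup {k | ∃ w ∈ M.lang, w.length = n ∧ M.jc w = k}

/-- `JC_M` is bounded by a constant. -/
def ConstBounded (M : DFAwtl Q V) : Prop :=
  ∃ c : ℕ, ∀ w ∈ M.lang, M.jc w ≤ c

/-- Extended (sequential) transition function on words. -/
def deltaStar (M : DFAwtl Q V) (q : Q) (w : List V) : Option Q :=
  w.foldl (fun o a => o.bind fun p => M.delta p a) (some q)

/-- A state `q` is `a`-deficient if `δ(q,a)` is undefined. -/
def Deficient (M : DFAwtl Q V) (q : Q) (a : V) : Prop :=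
  M.delta q a = none

/-- The set `⟨q,a⟩` (empty when `δ(q,a)` is defined). -/
def angleSet (M : DFAwtl Q V) (q : Q) (a : V) : Set Q :=
  {s | M.delta q a = none ∧ ∃ x : List V, x ≠ [] ∧
    M.SeqSteps (q, x) (s, []) ∧ M.Steps (s, a :: x) (q, [])}

/-- The set `[q,a]` (empty when `δ(q,a)` is defined). -/
def bracketSet (M : DFAwtl Q V) (q : Q) (a : V) : Set Q :=
  {s | M.delta q a = none ∧ ∃ x : List V, x ≠ [] ∧
    M.SeqSteps (q, x) (s, []) ∧ M.SeqSteps (s, a :: x) (q, [])}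

/-- Every state of the automaton is useful. -/
def AllUseful (M : DFAwtl Q V) : Prop :=
  ∀ q : Q, (∃ x : List V, M.SeqSteps (M.start, x) (q, [])) ∧
    (∃ (y : List V) (f : Q), f ∈ M.accept ∧ M.SeqSteps ((q : Q), y) (f, []))

/-- `δ(q,x')` is `a`-deficient for every prefix `x'` of `x`. -/
def PrefixDeficient (M : DFAwtl Q V) (q : Q) (a : V) (x : List V) : Prop :=
  ∀ x' : List V, ∀ p : Q, x' <+: x → M.deltaStar q x' = some p → M.delta p a = none

/-- `δ(q,y')` is `a`-deficient for every proper prefix `y'` of `y`. -/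
def ProperPrefixDeficient (M : DFAwtl Q V) (q : Q) (a : V) (y : List V) : Prop :=
  ∀ y' : List V, ∀ p : Q, y' <+: y → y' ≠ y → M.deltaStar q y' = some p → M.delta p a = none

/-- The condition of Claim 2: a pair `(q,a)` with `δ(q,a)` undefined, a nonempty
cycle in `q` visiting only `a`-deficient states, and an accepting path from `q`
reading a word `y` without `a` through `a`-deficient states and then an `a`. -/
def ClaimTwoCondition (M : DFAwtl Q V) (q : Q) (a : V) : Prop :=
  M.delta q a = none ∧
  (∃ x : List V, x ≠ [] ∧ M.SeqSteps (q, x) (q, []) ∧ M.PrefixDeficient q a x) ∧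
  (∃ (y z : List V) (f : Q), a ∉ y ∧ f ∈ M.accept ∧
    M.SeqSteps (q, y ++ a :: z) (f, []) ∧ M.ProperPrefixDeficient q a y)

end DFAwtl

namespace DFAwtl

variable {Q V : Type*}

/-- `p 0, p 1, …, p n = p 0` is a circuit in the transition graph of `M`,
with the `i`-th edge labelled by the letter `a i`. -/
def IsCircuit (M : DFAwtl Q V) (n : ℕ) (p : ℕ → Q) (a : ℕ → V) : Prop :=
  0 < n ∧ p n = p 0 ∧ ∀ i < n, M.delta (p i) (a i) = some (p (i + 1))

/-- The circuit is `x`-jumping: every state of the circuit from which an `x` is read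
is `b`-deficient for some letter `b`, and at least one edge is labelled by a letter
other than `x`. -/
def IsXJumpingCircuit (M : DFAwtl Q V) (n : ℕ) (p : ℕ → Q) (a : ℕ → V) (x : V) : Prop :=
  M.IsCircuit n p a ∧ (∀ i < n, a i = x → ∃ b : V, M.delta (p i) b = none) ∧
    ∃ i < n, a i ≠ x

/-- The state `q` is reachable from the initial state. -/
def ReachableState (M : DFAwtl Q V) (q : Q) : Prop :=
  ∃ u : List V, M.Steps (M.start, u) (q, [])

end DFAwtl
-- end preamble

/-!
Steps of `M` depend only on the part of the tape up to the letter being read, so a computation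
survives appending a suffix to its input. In the configuration `(q, abx)` the letter `a` is
translucent and `b` is read by a jump into `s`, after which `ax` leads back to `q`: the word `abx`
is a cycle at `q` containing a jump, and pumping it `n` times yields at least `n` jumps. As the next
letter to be read is determined by the configuration, this accepting computation is the only one.
-/

namespace DFAwtl

variable {Q V : Type*} {M : DFAwtl Q V}

/-- `M.ReadsPast c u c'`: a single move from `c` to `c'` that reads the letter standing right after
the translucent prefix `u`. It treats both kinds of step uniformly: the step is sequential if
`u = []` and jumping otherwise. -/
def ReadsPast (M : DFAwtl Q V) (c : Q × List V) (u : List V) (c' : Q × List V) : Prop :=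
  ∃ (v : List V) (a : V), c.2 = u ++ a :: v ∧ c'.2 = u ++ v ∧
    M.delta c.1 a = some c'.1 ∧ ∀ b ∈ u, M.delta c.1 b = none

theorem seqStep_iff_readsPast_nil {c c' : Q × List V} :
    M.SeqStep c c' ↔ M.ReadsPast c [] c' := by
  simp [SeqStep, ReadsPast]

theorem jumpStep_iff_exists_readsPast {c c' : Q × List V} :
    M.JumpStep c c' ↔ ∃ u ≠ [], M.ReadsPast c u c' := by
  simp [JumpStep, ReadsPast]

theorem ReadsPast.append_right {c c' : Q × List V} {u : List V} (h : M.ReadsPast c u c')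
    (w : List V) : M.ReadsPast (c.1, c.2 ++ w) u (c'.1, c'.2 ++ w) := by
  obtain ⟨v, a, hc, hc', ha, hu⟩ := h
  exact ⟨v ++ w, a, by simp [hc], by simp [hc'], ha, hu⟩

theorem ReadsPast.unique {c c₁ c₂ : Q × List V} {u₁ u₂ : List V} (h₁ : M.ReadsPast c u₁ c₁)
    (h₂ : M.ReadsPast c u₂ c₂) : u₁ = u₂ ∧ c₁ = c₂ := by
  obtain ⟨v₁, a₁, hc₁, hv₁, ha₁, hu₁⟩ := h₁
  obtain ⟨v₂, a₂, hc₂, hv₂, ha₂, hu₂⟩ := h₂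
  have takeWhile_eq {u v : List V} {a : V} {p : Q} (ha : M.delta c.1 a = some p)
      (hu : ∀ b ∈ u, M.delta c.1 b = none) :
      (u ++ a :: v).takeWhile (fun b => (M.delta c.1 b).isNone) = u := by
    rw [List.takeWhile_append_of_pos (by simpa using hu)]
    simp [ha]
  obtain rfl : u₁ = u₂ := by
    rw [← takeWhile_eq (v := v₁) ha₁ hu₁, ← hc₁, hc₂, takeWhile_eq ha₂ hu₂]
  obtain ⟨rfl, rfl⟩ : a₁ = a₂ ∧ v₁ = v₂ := by simpa [hc₁] using hc₂
  exact ⟨rfl, Prod.ext (Option.some_injective _ (ha₁.symm.trans ha₂)) (hv₁.trans hv₂.symm)⟩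

theorem SeqStep.unique {c c₁ c₂ : Q × List V} (h₁ : M.SeqStep c c₁) (h₂ : M.SeqStep c c₂) :
    c₁ = c₂ :=
  ((seqStep_iff_readsPast_nil.1 h₁).unique (seqStep_iff_readsPast_nil.1 h₂)).2

theorem JumpStep.unique {c c₁ c₂ : Q × List V} (h₁ : M.JumpStep c c₁) (h₂ : M.JumpStep c c₂) :
    c₁ = c₂ := by
  obtain ⟨_, -, h₁⟩ := jumpStep_iff_exists_readsPast.1 h₁
  obtain ⟨_, -, h₂⟩ := jumpStep_iff_exists_readsPast.1 h₂
  exact (h₁.unique h₂).2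

theorem SeqStep.not_jumpStep {c c₁ c₂ : Q × List V} (h₁ : M.SeqStep c c₁) :
    ¬ M.JumpStep c c₂ := fun h₂ => by
  obtain ⟨_, hu, h₂⟩ := jumpStep_iff_exists_readsPast.1 h₂
  exact hu (h₂.unique (seqStep_iff_readsPast_nil.1 h₁)).1

theorem not_step_nil {p : Q} {c : Q × List V} : ¬ M.Step (p, []) c := by
  simp [Step, SeqStep, JumpStep]

namespace StepsN

theorem steps {c d : Q × List V} {k : ℕ} (h : M.StepsN c d k) : M.Steps c d := by
  induction h with
  | refl c => exact .refl
  | seq hstep _ ih => exact ih.head (.inl hstep)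
  | jump hstep _ ih => exact ih.head (.inr hstep)

theorem trans {c d e : Q × List V} {k l : ℕ} (hcd : M.StepsN c d k) (hde : M.StepsN d e l) :
    M.StepsN c e (k + l) := by
  induction hcd with
  | refl c => rwa [Nat.zero_add]
  | seq hstep _ ih => exact .seq hstep (ih hde)
  | jump hstep _ ih => exact Nat.succ_add _ _ ▸ .jump hstep (ih hde)

theorem append_right {c d : Q × List V} {k : ℕ} (h : M.StepsN c d k) (w : List V) :
    M.StepsN (c.1, c.2 ++ w) (d.1, d.2 ++ w) k := by
  induction h with
  | refl c => exact .refl _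
  | seq hstep _ ih =>
    exact .seq (seqStep_iff_readsPast_nil.2
      ((seqStep_iff_readsPast_nil.1 hstep).append_right w)) ih
  | jump hstep _ ih =>
    obtain ⟨u, hu, hread⟩ := jumpStep_iff_exists_readsPast.1 hstep
    exact .jump (jumpStep_iff_exists_readsPast.2 ⟨u, hu, hread.append_right w⟩) ih

theorem append {p q r : Q} {u v : List V} {k l : ℕ} (hu : M.StepsN (p, u) (q, []) k)
    (hv : M.StepsN (q, v) (r, []) l) : M.StepsN (p, u ++ v) (r, []) (k + l) :=
  (hu.append_right v).trans hv

theorem flatten_replicate {q : Q} {u : List V} {k : ℕ} (h : M.StepsN (q, u) (q, []) k) (n : ℕ) :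
    M.StepsN (q, (List.replicate n u).flatten) (q, []) (n * k) := by
  induction n with
  | zero => simpa using .refl (q, [])
  | succ n ih =>
    rw [List.replicate_succ, List.flatten_cons, Nat.succ_mul, Nat.add_comm]
    exact h.append ih

theorem jumps_unique {c d e : Q × List V} {k l : ℕ} (hd : M.StepsN c d k) (he : M.StepsN c e l)
    (hd_halt : ∀ c', ¬ M.Step d c') (he_halt : ∀ c', ¬ M.Step e c') : k = l := by
  induction hd generalizing l with
  | refl c =>
    cases he with
    | refl => rfl
    | seq hstep _ => exact absurd (.inl hstep) (hd_halt _)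
    | jump hstep _ => exact absurd (.inr hstep) (hd_halt _)
  | seq hstep _ ih =>
    cases he with
    | refl => exact absurd (.inl hstep) (he_halt _)
    | seq hstep' he' => exact ih (hstep.unique hstep' ▸ he') hd_halt
    | jump hstep' _ => exact absurd hstep' hstep.not_jumpStep
  | jump hstep _ ih =>
    cases he with
    | refl => exact absurd (.inr hstep) (he_halt _)
    | seq hstep' _ => exact absurd hstep hstep'.not_jumpStep
    | jump hstep' he' => exact congrArg (· + 1) (ih (hstep.unique hstep' ▸ he') hd_halt)

end StepsN

theorem Steps.exists_stepsN {c d : Q × List V} (h : M.Steps c d) : ∃ k, M.StepsN c d k := by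
  induction h using Relation.ReflTransGen.head_induction_on with
  | refl => exact ⟨0, .refl d⟩
  | head hstep _ ih =>
    obtain ⟨k, hk⟩ := ih
    exact hstep.elim (fun hseq => ⟨k, .seq hseq hk⟩) fun hjump => ⟨k + 1, .jump hjump hk⟩

theorem SeqSteps.steps {c d : Q × List V} (h : M.SeqSteps c d) : M.Steps c d :=
  Relation.ReflTransGen.mono (fun _ _ => .inl) _ _ h

theorem AcceptsIn.mem_lang {w : List V} {k : ℕ} (h : M.AcceptsIn w k) : w ∈ M.lang := by
  obtain ⟨f, hf, hw⟩ := h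
  exact ⟨f, hf, hw.steps⟩

theorem AcceptsIn.jc_eq {w : List V} {k : ℕ} (h : M.AcceptsIn w k) : M.jc w = k := by
  have acceptsIn_iff : ∀ l, M.AcceptsIn w l ↔ l = k := fun l => by
    refine ⟨fun hl => ?_, fun hl => hl ▸ h⟩
    obtain ⟨f, -, hf⟩ := hl
    obtain ⟨g, -, hg⟩ := h
    exact hf.jumps_unique hg (fun _ => not_step_nil) fun _ => not_step_nil
  simp [jc, acceptsIn_iff]

theorem StepsN.cycle_of_translucent {q s : Q} {a b : V} {x : List V} {k : ℕ}
    (ha : M.delta q a = none) (hb : M.delta q b = some s) (hs : M.StepsN (s, a :: x) (q, []) k) :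
    M.StepsN (q, a :: b :: x) (q, []) (k + 1) :=
  have hjump : M.JumpStep (q, a :: b :: x) (s, a :: x) :=
    ⟨[a], x, b, by simp, rfl, rfl, hb, by simpa using ha⟩
  .jump hjump hs

theorem acceptsIn_pump {q f : Q} {u y z : List V} {i j k : ℕ}
    (hy : M.StepsN (M.start, y) (q, []) i) (hu : M.StepsN (q, u) (q, []) j)
    (hz : M.StepsN (q, z) (f, []) k) (hf : f ∈ M.accept) (n : ℕ) :
    M.AcceptsIn (y ++ (List.replicate n u).flatten ++ z) (i + n * j + k) :=
  ⟨f, hf, (hy.append (hu.flatten_replicate n)).append hz⟩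

theorem not_constBounded_of_forall_exists_le_jc (h : ∀ n, ∃ w ∈ M.lang, n ≤ M.jc w) :
    ¬ M.ConstBounded := by
  rintro ⟨c, hc⟩
  obtain ⟨w, hw, hcw⟩ := h (c + 1)
  exact absurd (hc w hw) (Nat.not_le.2 hcw)

end DFAwtl

theorem stmt_2_general {Q V : Type*} (M : DFAwtl Q V)
    (q s f : Q) (a b : V) (x y z : List V)
    (ha : M.delta q a = none) (hb : M.delta q b = some s)
    (hs : M.Steps (s, a :: x) (q, []))
    (hy : M.Steps (M.start, y) (q, []))
    (hz : M.Steps (q, z) (f, [])) (hf : f ∈ M.accept) :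
    (∀ n : ℕ,
      y ++ (List.replicate n (a :: b :: x)).flatten ++ z ∈ M.lang ∧
        n ≤ M.jc (y ++ (List.replicate n (a :: b :: x)).flatten ++ z)) ∧
      ¬ M.ConstBounded := by
  obtain ⟨i, hi⟩ := hy.exists_stepsN
  obtain ⟨j, hj⟩ := hs.exists_stepsN
  obtain ⟨k, hk⟩ := hz.exists_stepsN
  have hpump := DFAwtl.acceptsIn_pump hi (hj.cycle_of_translucent ha hb) hk hf
  have hw (n : ℕ) : y ++ (List.replicate n (a :: b :: x)).flatten ++ z ∈ M.lang ∧
      n ≤ M.jc (y ++ (List.replicate n (a :: b :: x)).flatten ++ z) := by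
    refine ⟨(hpump n).mem_lang, ?_⟩
    rw [(hpump n).jc_eq, Nat.mul_succ]
    omega
  exact ⟨hw, DFAwtl.not_constBounded_of_forall_exists_le_jc fun n => ⟨_, hw n⟩⟩

/-- Claim 1: if `δ(q,a)` is undefined, `δ(q,b) = s`, `(s,ax) →* (q,ε)`,
`(q₀,y) →* (q,ε)` and `(q,z) →* (f,ε)` with `f` final, then for every `n ≥ 1` the word
`w_n = y(abx)ⁿz` is accepted with at least `n` jumps; hence `JC_M` is not
constant-bounded. -/
theorem stmt_2 {Q V : Type*} [Fintype Q] [Fintype V] (M : DFAwtl Q V)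
    (q s f : Q) (a b : V) (x y z : List V)
    (ha : M.delta q a = none) (hb : M.delta q b = some s)
    (hs : M.SeqSteps (s, a :: x) (q, []))
    (hy : M.SeqSteps (M.start, y) (q, []))
    (hz : M.SeqSteps (q, z) (f, [])) (hf : f ∈ M.accept) :
    (∀ n : ℕ, 1 ≤ n →
      y ++ (List.replicate n (a :: b :: x)).flatten ++ z ∈ M.lang ∧
        n ≤ M.jc (y ++ (List.replicate n (a :: b :: x)).flatten ++ z)) ∧
      ¬ M.ConstBounded :=
  (stmt_2_general M q s f a b x y z ha hb hs.steps hy.steps hz.steps hf).imp_left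
    fun h n _ => h n
end

section
/- Let M be the DFAwtl over V={a,b} with states Q={q₀,q₁}, initial state q₀, final states F={q₀}, and partial transition function given by δ(q₀,a)=q₁ and δ(q₁,b)=q₀ (δ(q₀,b) and δ(q₁,a) undefined). Then L(M) = {w∈{a,b}* : |w|_a = |w|_b}, where |w|_x denotes the number of occurrences of the letter x in w. -/
-- end preamble

/-- The DFAwtl over `{a,b}` (with `a = 0`, `b = 1`) with states `q₀ = 0`, `q₁ = 1`,
initial and final state `q₀`, `δ(q₀,a) = q₁`, `δ(q₁,b) = q₀`, and `δ(q₀,b)`,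
`δ(q₁,a)` undefined. -/
def exampleM : DFAwtl (Fin 2) (Fin 2) :=
  { delta := ![![some 1, none], ![none, some 0]]
    start := 0
    accept := {0} }

/-!
Any computation of a DFAwtl deletes letters along a path of its transition graph, so an accepted
word is a permutation of one accepted by sequential steps alone. If every state reads at most one
letter, everything in front of that letter is translucent, and conversely every permutation of a
sequentially accepted word is accepted. The automaton considered here sequentially accepts exactly
the words `(ab)ⁿ`, whose permutations are the words with equally many `a`'s and `b`'s.
-/

namespace DFAwtl

variable {Q V : Type*} {M : DFAwtl Q V} {q p : Q}

theorem step_iff {w v : List V} :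
    M.Step (q, w) (p, v) ↔ ∃ x a y, w = x ++ a :: y ∧ v = x ++ y ∧
      M.delta q a = some p ∧ ∀ b ∈ x, M.delta q b = none := by
  constructor
  · rintro (⟨a, hw, ha⟩ | ⟨x, y, a, -, hw, hv, ha, hx⟩)
    · exact ⟨[], a, v, hw, rfl, ha, by simp⟩
    · exact ⟨x, a, y, hw, hv, ha, hx⟩
  · rintro ⟨x, a, y, rfl, rfl, ha, hx⟩
    rcases eq_or_ne x [] with rfl | hne
    · exact .inl ⟨a, rfl, ha⟩
    · exact .inr ⟨x, y, a, hne, rfl, rfl, ha, hx⟩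

theorem seqSteps_nil_iff : M.SeqSteps (q, []) (p, []) ↔ q = p := by
  constructor
  · intro h
    rcases h.cases_head with h | ⟨_, ⟨_, hnil, _⟩, _⟩
    · exact congrArg Prod.fst h
    · cases hnil
  · rintro rfl
    exact .refl

theorem seqSteps_cons_iff {a : V} {u : List V} :
    M.SeqSteps (q, a :: u) (p, []) ↔ ∃ r, M.delta q a = some r ∧ M.SeqSteps (r, u) (p, []) := by
  constructor
  · intro h
    rcases h.cases_head with h | ⟨⟨r, v⟩, ⟨b, hb, hr⟩, hrest⟩
    · cases h
    · cases hb
      exact ⟨r, hr, hrest⟩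
  · rintro ⟨r, hr, hrest⟩
    exact .head ⟨a, rfl, hr⟩ hrest

theorem Steps.exists_perm_seqSteps {w v : List V} (h : M.Steps (q, w) (p, v)) :
    ∃ u, w.Perm (u ++ v) ∧ M.SeqSteps (q, u) (p, []) := by
  suffices H : ∀ c, M.Steps c (p, v) → ∃ u, c.2.Perm (u ++ v) ∧ M.SeqSteps (c.1, u) (p, []) from
    H _ h
  intro c hc
  induction hc using Relation.ReflTransGen.head_induction_on with
  | refl => exact ⟨[], .rfl, .refl⟩
  | @head c d hstep _ ih =>
    obtain ⟨x, a, y, hc, hd, ha, -⟩ := step_iff.1 hstep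
    obtain ⟨u, hu, hseq⟩ := ih
    rw [hd] at hu
    rw [hc]
    exact ⟨a :: u, List.perm_middle.trans (hu.cons a), seqSteps_cons_iff.2 ⟨_, ha, hseq⟩⟩

/-- Every state reads at most one letter, so that in a state reading `a` all letters other than
`a` are translucent. -/
def IsSingleLetter (M : DFAwtl Q V) : Prop :=
  ∀ ⦃q p a b⦄, M.delta q a = some p → b ≠ a → M.delta q b = none

theorem IsSingleLetter.steps_of_seqSteps (hM : M.IsSingleLetter) {u w : List V}
    (hu : M.SeqSteps (q, u) (p, [])) (hwu : w.Perm u) : M.Steps (q, w) (p, []) := by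
  induction u generalizing q w with
  | nil =>
    obtain rfl := hwu.eq_nil
    obtain rfl := seqSteps_nil_iff.1 hu
    exact .refl
  | cons a u ih =>
    obtain ⟨r, hr, hrest⟩ := seqSteps_cons_iff.1 hu
    obtain ⟨x, y, rfl, hax⟩ := List.eq_append_cons_of_mem (hwu.mem_iff.2 List.mem_cons_self)
    have hstep : M.Step (q, x ++ a :: y) (r, x ++ y) :=
      step_iff.2 ⟨x, a, y, rfl, rfl, hr, fun b hb => hM hr (ne_of_mem_of_not_mem hb hax)⟩
    exact .head hstep (ih hrest (List.perm_middle.symm.trans hwu).cons_inv)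

theorem IsSingleLetter.mem_lang_iff (hM : M.IsSingleLetter) {w : List V} :
    w ∈ M.lang ↔ ∃ u, w.Perm u ∧ ∃ f ∈ M.accept, M.SeqSteps (M.start, u) (f, []) := by
  constructor
  · rintro ⟨f, hf, h⟩
    obtain ⟨u, hwu, hu⟩ := h.exists_perm_seqSteps
    exact ⟨u, by simpa only [List.append_nil] using hwu, f, hf, hu⟩
  · rintro ⟨u, hwu, f, hf, hu⟩
    exact ⟨f, hf, hM.steps_of_seqSteps hu hwu⟩

end DFAwtl

theorem exampleM_delta_eq_some_iff {q a p : Fin 2} :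
    exampleM.delta q a = some p ↔ a = q ∧ p = q + 1 := by
  revert q a p
  decide

theorem exampleM_isSingleLetter : exampleM.IsSingleLetter := by
  intro q p a b ha hba
  obtain ⟨rfl, -⟩ := exampleM_delta_eq_some_iff.1 ha
  exact Option.eq_none_iff_forall_ne_some.2 fun r hb => hba (exampleM_delta_eq_some_iff.1 hb).1

theorem exampleM_seqSteps_count {q : Fin 2} {u : List (Fin 2)}
    (h : exampleM.SeqSteps (q, u) (0, [])) : u.count 0 + q.val = u.count 1 := by
  induction u generalizing q with
  | nil => simp [DFAwtl.seqSteps_nil_iff.1 h]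
  | cons a u ih =>
    obtain ⟨r, hr, hrest⟩ := DFAwtl.seqSteps_cons_iff.1 h
    obtain ⟨rfl, rfl⟩ := exampleM_delta_eq_some_iff.1 hr
    fin_cases a
    · have hcount : u.count 0 + 1 = u.count 1 := ih hrest
      simpa using hcount
    · have hcount : u.count 0 = u.count 1 := ih hrest
      simp [hcount]

theorem exampleM_seqSteps_flatten_replicate (n : ℕ) :
    exampleM.SeqSteps (0, (List.replicate n [0, 1]).flatten) (0, []) := by
  induction n with
  | zero => exact .refl
  | succ n ih => exact DFAwtl.seqSteps_cons_iff.2 ⟨1, rfl, DFAwtl.seqSteps_cons_iff.2 ⟨0, rfl, ih⟩⟩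

theorem perm_flatten_replicate_of_count_eq {w : List (Fin 2)} (h : w.count 0 = w.count 1) :
    w.Perm (List.replicate (w.count 0) [0, 1]).flatten := by
  refine List.perm_iff_count.2 fun a => ?_
  fin_cases a <;> simp [List.count_flatten, h]

/-- the automaton above accepts exactly the words with equally many
`a`'s and `b`'s. -/
theorem stmt_14 :
    exampleM.lang = {w : List (Fin 2) | w.count 0 = w.count 1} := by
  ext w
  rw [exampleM_isSingleLetter.mem_lang_iff, Set.mem_ofPred_eq]
  constructor
  · rintro ⟨u, hwu, f, rfl, hu⟩
    rw [hwu.count_eq, hwu.count_eq]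
    exact exampleM_seqSteps_count hu
  · intro h
    exact ⟨_, perm_flatten_replicate_of_count_eq h, 0, rfl,
      exampleM_seqSteps_flatten_replicate _⟩
end
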